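/- Let G be a 24×24 symmetric positive definite integer matrix with even diagonal entries, determinant 1, and such that there is no x ∈ ℤ²⁴ with xᵀGx = 2 (i.e. G is a Gram matrix of the Leech lattice). Then for every integer n ≥ 0, #{(a,b) ∈ ℤ² : 2a² + ab + 3b² = n} ≡ #{x ∈ ℤ²⁴ : xᵀGx = 2n} (mod 23). (This is the degree 1 congruence θ_{[2,1,3]}^(1) ≡ θ_𝓛^(1) (mod 23).) -/

import Mathlib

/-!
The congruence compares the Leech lattice with another even unimodular lattice of rank 24, the
lattice `D₂₄⁺`, which has a visible symmetry of order 23.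

Twice a vector of `D₂₄⁺` is an integer vector whose coordinates have one parity and a sum divisible
by 4. The rotation of 23 of the coordinates acts on the vectors of norm `2 m`, so modulo 23 their
number is the number of fixed ones. Twice a fixed vector has the form `(t + 4 u, t, …, t)`, of
squared length `8 (2 u² + u t + 3 t²)`: the fixed vectors are counted by the form `[2,1,3]`
(`rep_D_modEq`).

The theta series of both lattices are modular forms of weight 12 for `SL₂(ℤ)`. Invariance under
`τ ↦ -1/τ` is Poisson summation (`poisson`, `IsGram.theta_S`), and the `q`-expansion gives the
rest (`IsGram.form`). Let `r` be the number of roots of `D₂₄⁺`. As the Leech lattice has no roots,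
`720 Θ_D - r E₄³ - (720 - r) Θ_G` vanishes to order 2 at the cusp, hence is zero by the Sturm bound
(`rep_relation`). Since `2 a² + a b + 3 b²` does not represent 1, `r` is divisible by 23, and the
relation becomes `720 Θ_D ≡ 720 Θ_G` modulo 23, where 720 is invertible.
-/

open Matrix

namespace LeechTheta

/-! ### Poisson summation for Gaussians on a unimodular lattice -/

section Poisson
open MeasureTheory Complex Real Set

variable {n : ℕ}

/-- The quadratic form `v ↦ ‖B v‖²` of the lattice spanned by the columns of `B`. -/
def qf (B : Matrix (Fin n) (Fin n) ℝ) (v : Fin n → ℝ) : ℝ := ∑ i, (B *ᵥ v) i ^ 2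

/-- The Gaussian `v ↦ exp (π i τ ‖B v‖²)`, whose sum over `ℤⁿ` is the theta series of the lattice
spanned by the columns of `B`. -/
noncomputable def gs (B : Matrix (Fin n) (Fin n) ℝ) (τ : ℂ) (v : Fin n → ℝ) : ℂ :=
  cexp (π * I * τ * qf B v)

/-- The integer vector `x` as a real vector. -/
abbrev ic (x : Fin n → ℤ) : Fin n → ℝ := fun i => (x i : ℝ)

lemma norm_gs (B : Matrix (Fin n) (Fin n) ℝ) (τ : ℂ) (v : Fin n → ℝ) :
    ‖gs B τ v‖ = rexp (-π * τ.im * qf B v) := by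
  rw [gs, Complex.norm_exp]
  congr 1
  simp

lemma continuous_qf (B : Matrix (Fin n) (Fin n) ℝ) : Continuous (qf B) := by
  unfold qf; fun_prop

lemma continuous_gs (B : Matrix (Fin n) (Fin n) ℝ) (τ : ℂ) : Continuous (gs B τ) := by
  have := continuous_qf B
  unfold gs; fun_prop

/-- An invertible `B` distorts lengths by a bounded factor, by Cauchy-Schwarz applied to
`v = B⁻¹ (B v)`. -/
lemma exists_lower_bound {B : Matrix (Fin n) (Fin n) ℝ} (hB : B.det ≠ 0) :
    ∃ c > 0, ∀ v : Fin n → ℝ, c * ∑ i, v i ^ 2 ≤ qf B v := by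
  set K : ℝ := ∑ i, ∑ j, (B⁻¹ i j) ^ 2 with hK
  have hK0 : 0 ≤ K := by positivity
  refine ⟨(K + 1)⁻¹, by positivity, fun v => ?_⟩
  have hv : B⁻¹ *ᵥ (B *ᵥ v) = v := by
    rw [mulVec_mulVec, nonsing_inv_mul _ (isUnit_iff_ne_zero.2 hB), one_mulVec]
  have h1 : ∑ i, v i ^ 2 ≤ K * qf B v := by
    rw [hK, Finset.sum_mul]
    refine Finset.sum_le_sum fun i _ => ?_
    have := Finset.sum_mul_sq_le_sq_mul_sq Finset.univ (fun j => B⁻¹ i j) (B *ᵥ v)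
    calc v i ^ 2 = (∑ j, B⁻¹ i j * (B *ᵥ v) j) ^ 2 := by
          conv_lhs => rw [← hv]
          rfl
      _ ≤ _ := this
  have h2 : 0 ≤ qf B v := by unfold qf; positivity
  rw [inv_mul_le_iff₀ (by positivity)]
  nlinarith

/-- The one-dimensional Gaussian sum is the Jacobi theta series at `i a / π`. -/
lemma summable_gauss_int {a : ℝ} (ha : 0 < a) : Summable fun k : ℤ => rexp (-a * (k : ℝ) ^ 2) := by
  have h := ((summable_jacobiTheta₂_term_iff 0 ((a / π : ℝ) * I)).2 (by simp; positivity)).norm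
  refine h.congr fun k => ?_
  rw [jacobiTheta₂_term, Complex.norm_exp]
  congr 1
  have : (2 * π * I * k * 0 + π * I * (k : ℂ) ^ 2 * ((a / π : ℝ) * I) : ℂ)
      = ((-a * (k : ℝ) ^ 2 : ℝ) : ℂ) := by
    push_cast
    have : (π : ℂ) ≠ 0 := by exact_mod_cast pi_ne_zero
    field_simp
    linear_combination (k : ℂ) ^ 2 * a * I_sq
  rw [this, ofReal_re]

lemma summable_gauss {a : ℝ} (ha : 0 < a) :
    Summable fun x : Fin n → ℤ => rexp (-a * ∑ i, (x i : ℝ) ^ 2) := by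
  induction n with
  | zero => exact (hasSum_fintype _).summable
  | succ n ih =>
    rw [← (Fin.consEquiv fun _ => ℤ).summable_iff]
    refine ((summable_gauss_int ha).mul_of_nonneg ih (fun _ => (Real.exp_pos _).le)
      (fun _ => (Real.exp_pos _).le)).congr fun p => ?_
    simp only [Function.comp, Fin.consEquiv, Equiv.coe_fn_mk, Fin.sum_univ_succ, Fin.cons_zero,
      Fin.cons_succ, mul_add, Real.exp_add]

/-- One summable majorant dominates the translated Gaussian sums for all `τ` with `Im τ ≥ ε` and all
shifts in a box. It yields summability and continuity in the shift, and holomorphy in `τ`. -/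
lemma exists_majorant {B : Matrix (Fin n) (Fin n) ℝ} (hB : B.det ≠ 0) {ε : ℝ} (hε : 0 < ε) (R : ℝ) :
    ∃ u : (Fin n → ℤ) → ℝ, Summable u ∧ ∀ τ : ℂ, ε ≤ τ.im → ∀ v : Fin n → ℝ, (∀ i, |v i| ≤ R) →
      ∀ x, ‖gs B τ (v + ic x)‖ ≤ u x := by
  obtain ⟨c, hc, h⟩ := exists_lower_bound hB
  refine ⟨fun x => rexp (π * ε * c * (n * R ^ 2)) *
    rexp (-(π * ε * c / 2) * ∑ i, (x i : ℝ) ^ 2), (summable_gauss (by positivity)).mul_left _,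
    fun τ hτ v hv x => ?_⟩
  beta_reduce
  rw [norm_gs, ← Real.exp_add, Real.exp_le_exp]
  -- `x² / 2 - R² ≤ (v + x)²` for `|v| ≤ R`, because `(2 v + x)² ≥ 0`.
  have h1 : ∑ i, (x i : ℝ) ^ 2 / 2 - n * R ^ 2 ≤ ∑ i, (v + ic x) i ^ 2 := by
    have : (n : ℝ) * R ^ 2 = ∑ _i : Fin n, R ^ 2 := by simp
    rw [this, ← Finset.sum_sub_distrib]
    refine Finset.sum_le_sum fun i _ => ?_
    have := sq_le_sq' (abs_le.1 (hv i)).1 (abs_le.1 (hv i)).2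
    simp only [Pi.add_apply, ic]
    nlinarith [sq_nonneg (2 * v i + x i)]
  have h2 := h (v + ic x)
  rw [← Finset.sum_div] at h1
  have h3 : 0 ≤ qf B (v + ic x) := by unfold qf; positivity
  have h4 : ε * (c * ((∑ i, (x i : ℝ) ^ 2) / 2 - n * R ^ 2)) ≤ τ.im * qf B (v + ic x) :=
    (mul_le_mul_of_nonneg_left ((mul_le_mul_of_nonneg_left h1 hc.le).trans h2) hε.le).trans
      (mul_le_mul_of_nonneg_right hτ h3)
  nlinarith [mul_le_mul_of_nonneg_left h4 pi_pos.le]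

lemma summable_gs {B : Matrix (Fin n) (Fin n) ℝ} (hB : B.det ≠ 0) {τ : ℂ} (hτ : 0 < τ.im)
    (v : Fin n → ℝ) : Summable fun x : Fin n → ℤ => gs B τ (v + ic x) := by
  obtain ⟨u, hu, h⟩ := exists_majorant hB hτ (∑ i, |v i|)
  exact .of_norm_bounded hu (h τ le_rfl v fun i =>
    Finset.single_le_sum (f := fun i => |v i|) (fun i _ => abs_nonneg _) (Finset.mem_univ i))

/-- The `ℤⁿ`-periodization of the Gaussian `gs B τ`. -/
noncomputable def per (B : Matrix (Fin n) (Fin n) ℝ) (τ : ℂ) (v : Fin n → ℝ) : ℂ :=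
  ∑' x : Fin n → ℤ, gs B τ (v + ic x)

lemma continuous_per {B : Matrix (Fin n) (Fin n) ℝ} (hB : B.det ≠ 0) {τ : ℂ} (hτ : 0 < τ.im) :
    Continuous (per B τ) := by
  rw [continuous_iff_continuousAt]
  intro v
  obtain ⟨u, hu, h⟩ := exists_majorant hB hτ (‖v‖ + 1)
  have : ContinuousOn (per B τ) (Metric.ball v 1) := by
    refine continuousOn_tsum (fun x => ((continuous_gs B τ).comp (by fun_prop)).continuousOn) hu ?_
    intro x w hw
    refine h τ le_rfl w (fun i => ?_) x
    have h1 : ‖w‖ ≤ ‖v‖ + ‖w - v‖ := by simpa using norm_add_le v (w - v)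
    have h2 : ‖w - v‖ < 1 := by simpa [dist_eq_norm] using hw
    have h3 := norm_le_pi_norm w i
    rw [Real.norm_eq_abs] at h3
    linarith
  exact this.continuousAt (Metric.ball_mem_nhds _ one_pos)

lemma per_add (B : Matrix (Fin n) (Fin n) ℝ) (τ : ℂ) (v : Fin n → ℝ) (y : Fin n → ℤ) :
    per B τ (v + ic y) = per B τ v := by
  unfold per
  rw [← (Equiv.addLeft y).tsum_eq (fun x => gs B τ (v + ic x))]
  refine tsum_congr fun x => ?_
  congr 1
  ext i
  simp [ic, add_assoc]

/-- The quotient map `ℝⁿ → ℝⁿ/ℤⁿ`. -/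
abbrev proj (v : Fin n → ℝ) : UnitAddTorus (Fin n) := fun i => (v i : UnitAddCircle)

lemma isOpenQuotientMap_proj : IsOpenQuotientMap (proj (n := n)) := by
  have : IsOpenQuotientMap (Pi.map (fun _ : Fin n => ((↑) : ℝ → UnitAddCircle))) :=
    IsOpenQuotientMap.piMap fun _ => QuotientAddGroup.isOpenQuotientMap_mk
  exact this

lemma per_eq_of_proj_eq (B : Matrix (Fin n) (Fin n) ℝ) (τ : ℂ) {v w : Fin n → ℝ}
    (h : proj v = proj w) : per B τ v = per B τ w := by
  have h1 : ∀ i, ∃ k : ℤ, w i = v i + k := fun i => by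
    have h2 : ((w i - v i : ℝ) : UnitAddCircle) = 0 := by
      rw [AddCircle.coe_sub, sub_eq_zero]
      exact (congrFun h i).symm
    obtain ⟨k, hk⟩ := (AddCircle.coe_eq_zero_iff _).1 h2
    exact ⟨k, by simp at hk; linarith⟩
  choose y hy using h1
  rw [← per_add B τ v y]
  congr 1
  ext i
  simp [ic, hy]

/-- The half-open unit cube with lower corner `y`; these cubes tile `ℝⁿ`. -/
def box (y : Fin n → ℤ) : Set (Fin n → ℝ) := {v | ∀ i, v i ∈ Ioc (y i : ℝ) (y i + 1)}

lemma measurableSet_box (y : Fin n → ℤ) : MeasurableSet (box y) := by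
  have : box y = Set.pi univ fun i => Ioc (y i : ℝ) (y i + 1) := by ext; simp [box]
  rw [this]
  exact .univ_pi fun i => measurableSet_Ioc

lemma mem_box_iff {y : Fin n → ℤ} {v : Fin n → ℝ} : v ∈ box y ↔ y = fun i => ⌈v i⌉ - 1 := by
  simp only [box, mem_ofPred_eq, funext_iff, mem_Ioc]
  refine forall_congr' fun i => ?_
  rw [eq_sub_iff_add_eq, eq_comm, Int.ceil_eq_iff]
  push_cast
  simp

lemma iUnion_box : ⋃ y : Fin n → ℤ, box y = univ := by
  ext v; simp [mem_box_iff]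

lemma pairwise_disjoint_box : Pairwise (Function.onFun Disjoint (box (n := n))) := by
  intro y z hyz
  refine Set.disjoint_left.2 fun v hy hz => hyz ?_
  rw [mem_box_iff] at hy hz
  rw [hy, hz]

/-- Integration over `ℝⁿ`, cut into translates of the unit cube. -/
lemma hasSum_integral_box {E : Type*} [NormedAddCommGroup E] [NormedSpace ℝ E]
    {g : (Fin n → ℝ) → E} (hg : Integrable g) :
    HasSum (fun x : Fin n → ℤ => ∫ v in box 0, g (v + ic x)) (∫ v, g v) := by
  have h := hasSum_integral_iUnion (μ := volume) measurableSet_box pairwise_disjoint_box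
    (f := g) (by rw [iUnion_box]; exact hg.integrableOn)
  rw [iUnion_box, setIntegral_univ] at h
  convert h using 2 with x
  rw [← (measurePreserving_add_right volume (ic x)).setIntegral_preimage_emb
    (MeasurableEquiv.addRight _).measurableEmbedding g (box x)]
  congr 2
  ext v
  simp [box, ic, add_comm (x _ : ℝ) 1]

/-- Unfolding: the periodization of `g` integrates over the unit cube to the integral of `g`. -/
lemma integral_box_tsum {g : (Fin n → ℝ) → ℂ} (hg : Integrable g) :
    ∫ v in box 0, ∑' x, g (v + ic x) = ∫ v, g v := by
  refine (hasSum_integral_of_summable_integral_norm (fun x => ?_) ?_).unique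
    (hasSum_integral_box hg)
  · exact (hg.comp_add_right (ic x)).integrableOn
  · exact (hasSum_integral_box hg.norm).summable

lemma measurePreserving_mulVec {B : Matrix (Fin n) (Fin n) ℝ} (hB : |B.det| = 1) :
    MeasurePreserving (fun v => B *ᵥ v) volume volume := by
  have h0 : B.det ≠ 0 := fun h => by simp [h] at hB
  refine ⟨by fun_prop, ?_⟩
  have := Real.map_matrix_volume_pi_eq_smul_volume_pi h0
  rw [abs_inv, hB] at this
  have h1 : Measure.map (toLin' B) volume = volume := by simpa using this
  exact h1

lemma mFourier_proj (m : Fin n → ℤ) (v : Fin n → ℝ) :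
    UnitAddTorus.mFourier m (proj v) = cexp (2 * π * I * ∑ i, (m i : ℂ) * v i) := by
  simp only [UnitAddTorus.mFourier, ContinuousMap.coe_mk, proj, fourier_coe_apply,
    ← Complex.exp_sum, Finset.mul_sum]
  congr 1
  refine Finset.sum_congr rfl fun i _ => ?_
  simp; ring

/-- `(B⁻¹)ᵀ` spans the dual lattice. -/
lemma mulVec_dual {B : Matrix (Fin n) (Fin n) ℝ} (hB : B.det ≠ 0) (m v : Fin n → ℝ) :
    ∑ i, ((B⁻¹)ᵀ *ᵥ m) i * (B *ᵥ v) i = ∑ i, m i * v i := by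
  change ((B⁻¹)ᵀ *ᵥ m) ⬝ᵥ (B *ᵥ v) = m ⬝ᵥ v
  rw [mulVec_transpose, ← dotProduct_mulVec, mulVec_mulVec,
    nonsing_inv_mul _ (isUnit_iff_ne_zero.2 hB), one_mulVec]

/-- In the variable `w = B v` the integrand of the `m`-th Fourier coefficient is a Gaussian with a
linear term, the shape covered by Mathlib's Gaussian integrals. -/
lemma integrand_eq {B : Matrix (Fin n) (Fin n) ℝ} (hB : B.det ≠ 0) (τ : ℂ)
    (m : Fin n → ℤ) (v : Fin n → ℝ) :
    UnitAddTorus.mFourier (-m) (proj v) * gs B τ v =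
      cexp (-(-π * I * τ) * ∑ i, ((B *ᵥ v) i : ℂ) ^ 2 +
        ∑ i, (-2 * π * I * ((B⁻¹)ᵀ *ᵥ ic m) i) * (B *ᵥ v) i) := by
  have h := congrArg (fun t : ℝ => (t : ℂ)) (mulVec_dual hB (ic m) v)
  push_cast at h
  rw [mFourier_proj, gs, ← Complex.exp_add, qf]
  congr 1
  simp_rw [mul_assoc (-2 * (π : ℂ) * I), ← Finset.mul_sum]
  rw [h]
  simp
  ring

lemma integrable_integrand {B : Matrix (Fin n) (Fin n) ℝ} (hB : |B.det| = 1) {τ : ℂ}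
    (hτ : 0 < τ.im) (m : Fin n → ℤ) :
    Integrable fun v => UnitAddTorus.mFourier (-m) (proj v) * gs B τ v := by
  have h0 : B.det ≠ 0 := fun h => by simp [h] at hB
  simp_rw [integrand_eq h0]
  have hb : 0 < (-π * I * τ).re := by simp; positivity
  exact (measurePreserving_mulVec hB).integrable_comp_of_integrable
    (GaussianFourier.integrable_cexp_neg_mul_sum_add hb
      (fun i => (-2 * π * I * ((B⁻¹)ᵀ *ᵥ ic m) i)))

/-- The Fourier transform of `gs B τ` at the integer vector `m`. -/
lemma integral_integrand {B : Matrix (Fin n) (Fin n) ℝ} (hB : |B.det| = 1) {τ : ℂ}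
    (hτ : 0 < τ.im) (m : Fin n → ℤ) :
    ∫ v, UnitAddTorus.mFourier (-m) (proj v) * gs B τ v =
      (I / τ) ^ (n / 2 : ℂ) * gs (B⁻¹)ᵀ (-1 / τ) (ic m) := by
  have h0 : B.det ≠ 0 := fun h => by simp [h] at hB
  have hb : 0 < (-π * I * τ).re := by simp; positivity
  have hτ0 : τ ≠ 0 := fun h => by simp [h] at hτ
  have hpi : (π : ℂ) ≠ 0 := by exact_mod_cast pi_ne_zero
  have hemb : MeasurableEmbedding fun v => B *ᵥ v :=
    Continuous.measurableEmbedding (by fun_prop)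
      (mulVec_injective_iff_isUnit.2 ((isUnit_iff_isUnit_det _).2 (isUnit_iff_ne_zero.2 h0)))
  simp_rw [integrand_eq h0]
  rw [(measurePreserving_mulVec hB).integral_comp hemb
    (g := fun w : Fin n → ℝ => cexp (-(-π * I * τ) * ∑ i, (w i : ℂ) ^ 2 +
        ∑ i, (-2 * π * I * ((B⁻¹)ᵀ *ᵥ ic m) i) * w i))]
  rw [GaussianFourier.integral_cexp_neg_mul_sum_add hb]
  congr 1
  · simp only [Fintype.card_fin]
    congr 1
    field_simp
    simp
  · rw [gs, qf]
    congr 1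
    simp_rw [mul_pow, ← Finset.mul_sum]
    push_cast
    field_simp
    simp
    ring

/-- Poisson summation for Gaussians, for a lattice of covolume 1: the Fourier series of the
periodization, evaluated at the origin. -/
theorem poisson {B : Matrix (Fin n) (Fin n) ℝ} (hB : |B.det| = 1) {τ : ℂ} (hτ : 0 < τ.im) :
    ∑' x : Fin n → ℤ, gs B τ (ic x) =
      (I / τ) ^ (n / 2 : ℂ) * ∑' m : Fin n → ℤ, gs (B⁻¹)ᵀ (-1 / τ) (ic m) := by
  have h0 : B.det ≠ 0 := fun h => by simp [h] at hB
  have hτ' : 0 < (-1 / τ).im := by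
    have : τ ≠ 0 := fun h => by simp [h] at hτ
    have := Complex.normSq_pos.2 this
    rw [neg_div, one_div, neg_im, inv_im]
    rw [neg_div, neg_neg]; positivity
  -- The periodization descends to a continuous function on the torus.
  let F : C(UnitAddTorus (Fin n), ℂ) :=
    ⟨fun t => per B τ (Function.surjInv isOpenQuotientMap_proj.surjective t), by
      rw [isOpenQuotientMap_proj.isQuotientMap.continuous_iff]
      refine (continuous_per h0 hτ).congr fun v => ?_
      exact per_eq_of_proj_eq B τ (Function.surjInv_eq isOpenQuotientMap_proj.surjective _).symm⟩
  have hF : ∀ v, F (proj v) = per B τ v := fun v =>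
    per_eq_of_proj_eq B τ (Function.surjInv_eq isOpenQuotientMap_proj.surjective _)
  have hcoeff : ∀ m, UnitAddTorus.mFourierCoeff F m =
      (I / τ) ^ (n / 2 : ℂ) * gs (B⁻¹)ᵀ (-1 / τ) (ic m) := fun m => by
    rw [← integral_integrand hB hτ, ← integral_box_tsum (integrable_integrand hB hτ m),
      UnitAddTorus.mFourierCoeff_eq_integral _ _ (0 : Fin n → ℝ)]
    have : {x : Fin n → ℝ | ∀ i, x i ∈ Ioc ((0 : Fin n → ℝ) i) ((0 : Fin n → ℝ) i + 1)} = box 0 := by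
      simp [box]
    rw [this]
    congr 1
    ext v
    rw [show F (fun i => (v i : UnitAddCircle)) = per B τ v from hF v, smul_eq_mul, per,
      ← tsum_mul_left]
    refine tsum_congr fun x => ?_
    congr 2
    ext i
    simp [proj, ic]
  have hsum : Summable fun m : Fin n → ℤ => gs (B⁻¹)ᵀ (-1 / τ) (ic m) := by
    have hd : ((B⁻¹)ᵀ).det ≠ 0 := by
      rw [det_transpose, det_nonsing_inv]; simpa using h0
    simpa using summable_gs hd hτ' 0
  have key := UnitAddTorus.hasSum_mFourier_series_apply_of_summable (f := F)
    (by rw [funext hcoeff]; exact hsum.mul_left _) (proj 0)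
  rw [hF] at key
  rw [← tsum_mul_left, show ∑' x : Fin n → ℤ, gs B τ (ic x) = per B τ 0 by simp [per],
    ← key.tsum_eq]
  refine tsum_congr fun m => ?_
  rw [hcoeff, mFourier_proj]
  simp

end Poisson
/-! ### The theta series as a modular form of weight 12 -/

section Modular
open Complex Real UpperHalfPlane ModularForm MatrixGroups Manifold

variable {n : ℕ}

/-- `G` is the Gram matrix of the even unimodular lattice spanned by the columns of the real
matrix `B`. -/
structure IsGram (B : Matrix (Fin 24) (Fin 24) ℝ) (G : Matrix (Fin 24) (Fin 24) ℤ) : Prop where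
  transpose_mul : Bᵀ * B = G.map (Int.cast : ℤ → ℝ)
  det_eq : G.det = 1
  even : ∀ i, 2 ∣ G i i

variable {B : Matrix (Fin 24) (Fin 24) ℝ} {G : Matrix (Fin 24) (Fin 24) ℤ}

lemma IsGram.abs_det (h : IsGram B G) : |B.det| = 1 := by
  have h1 := congrArg Matrix.det h.transpose_mul
  have h2 : (G.map (Int.cast : ℤ → ℝ)).det = ((G.det : ℤ) : ℝ) :=
    ((Int.castRingHom ℝ).map_det G).symm
  rw [det_mul, det_transpose, h2, h.det_eq, Int.cast_one] at h1
  rcases mul_self_eq_one_iff.1 h1 with h | h <;> simp [h]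

lemma IsGram.det_ne_zero (h : IsGram B G) : B.det ≠ 0 := fun h0 => by
  simpa [h0] using h.abs_det

lemma IsGram.isSymm (h : IsGram B G) : G.IsSymm := by
  have : (Bᵀ * B)ᵀ = Bᵀ * B := by simp
  rw [h.transpose_mul] at this
  ext i j
  have := congrFun (congrFun this i) j
  simpa using this

lemma map_mulVec_ic (G : Matrix (Fin n) (Fin n) ℤ) (x : Fin n → ℤ) :
    G.map (Int.cast : ℤ → ℝ) *ᵥ ic x = ic (G *ᵥ x) := by
  ext i
  simp [mulVec, dotProduct, ic]

lemma IsGram.qf_eq (h : IsGram B G) (x : Fin 24 → ℤ) :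
    qf B (ic x) = ((x ⬝ᵥ G *ᵥ x : ℤ) : ℝ) := by
  have h1 : qf B (ic x) = (B *ᵥ ic x) ⬝ᵥ (B *ᵥ ic x) := by
    simp [qf, dotProduct, sq]
  rw [h1, dotProduct_mulVec, ← mulVec_transpose, mulVec_mulVec, h.transpose_mul, map_mulVec_ic,
    dotProduct_comm]
  simp [dotProduct, ic]

/-- Values of an even form are even: modulo 2 the terms `(i, j)` and `(j, i)` cancel and the diagonal
terms vanish. -/
lemma IsGram.two_dvd (h : IsGram B G) (x : Fin 24 → ℤ) : 2 ∣ x ⬝ᵥ G *ᵥ x := by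
  have h1 : ((x ⬝ᵥ G *ᵥ x : ℤ) : ZMod 2) =
      ∑ p : Fin 24 × Fin 24, (x p.1 : ZMod 2) * (G p.1 p.2 * x p.2) := by
    simp [dotProduct, mulVec, Fintype.sum_prod_type, Finset.mul_sum]
  have h2 : ∑ p : Fin 24 × Fin 24, (x p.1 : ZMod 2) * (G p.1 p.2 * x p.2) = 0 := by
    refine Finset.sum_involution (fun p _ => p.swap) (fun p _ => ?_) (fun p _ hp => ?_)
      (fun _ _ => Finset.mem_univ _) (fun _ _ => Prod.swap_swap _)
    · have := h.isSymm.apply p.1 p.2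
      simp only [Prod.fst_swap, Prod.snd_swap, this]
      linear_combination (x p.1 * (G p.1 p.2 * x p.2) : ZMod 2) * (by decide : (2 : ZMod 2) = 0)
    · contrapose! hp
      have h3 : p.2 = p.1 := congrArg Prod.fst hp
      have h4 : (G p.1 p.1 : ZMod 2) = 0 := (ZMod.intCast_zmod_eq_zero_iff_dvd _ 2).2 (h.even _)
      simp [h3, h4]
  rw [h2] at h1
  exact (ZMod.intCast_zmod_eq_zero_iff_dvd _ 2).1 h1

lemma IsGram.nonneg (h : IsGram B G) (x : Fin 24 → ℤ) : 0 ≤ x ⬝ᵥ G *ᵥ x := by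
  have := h.qf_eq x
  have h1 : 0 ≤ qf B (ic x) := by unfold qf; positivity
  rw [this] at h1
  exact_mod_cast h1

/-- The theta series of the lattice spanned by the columns of `B`. -/
noncomputable def theta (B : Matrix (Fin 24) (Fin 24) ℝ) (τ : ℍ) : ℂ :=
  ∑' x : Fin 24 → ℤ, gs B τ (ic x)

/-- The number of vectors of norm `2 m`, that is, the `m`-th coefficient of the theta series. For a
positive definite `G` the set is finite, so `Nat.card` is the true count. -/
noncomputable def rep (G : Matrix (Fin 24) (Fin 24) ℤ) (m : ℕ) : ℕ :=
  Nat.card {x : Fin 24 → ℤ // x ⬝ᵥ (G *ᵥ x) = 2 * (m : ℤ)}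

lemma summable_theta (hB : B.det ≠ 0) (τ : ℍ) :
    Summable fun x : Fin 24 → ℤ => gs B τ (ic x) := by
  simpa using summable_gs hB τ.im_pos 0

/-- The `q`-expansion of the theta series, obtained by collecting the vectors of equal norm. -/
lemma IsGram.hasSum_theta (h : IsGram B G) (τ : ℍ) :
    HasSum (fun m : ℕ => (rep G m : ℂ) • Function.Periodic.qParam 1 τ ^ m) (theta B τ) := by
  have h1 := (summable_theta h.det_ne_zero τ).hasSum.tsum_fiberwise
    (fun x => (x ⬝ᵥ G *ᵥ x / 2).toNat)
  have key : ∀ m : ℕ, ∑' x : (fun x => (x ⬝ᵥ G *ᵥ x / 2).toNat) ⁻¹' {m}, gs B τ (ic x.1) =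
      (rep G m : ℂ) • Function.Periodic.qParam 1 τ ^ m := fun m => by
    have hset : ∀ x : Fin 24 → ℤ, x ∈ (fun x => (x ⬝ᵥ G *ᵥ x / 2).toNat) ⁻¹' {m} ↔
        x ⬝ᵥ (G *ᵥ x) = 2 * (m : ℤ) := fun x => by
      have h2 := h.two_dvd x
      have h3 := h.nonneg x
      simp only [Set.mem_preimage, Set.mem_singleton_iff]
      omega
    have hval : ∀ x : (fun x => (x ⬝ᵥ G *ᵥ x / 2).toNat) ⁻¹' {m},
        gs B τ (ic x.1) = Function.Periodic.qParam 1 τ ^ m := fun x => by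
      rw [gs, h.qf_eq, (hset x).1 x.2, Function.Periodic.qParam, ← Complex.exp_nat_mul]
      congr 1
      push_cast
      ring
    rw [tsum_congr hval, tsum_const, rep, Nat.card_congr (Equiv.subtypeEquivRight hset),
      nsmul_eq_mul, smul_eq_mul]
  simp only [key] at h1
  exact h1

lemma differentiableOn_theta (hB : B.det ≠ 0) :
    DifferentiableOn ℂ (fun τ : ℂ => ∑' x : Fin 24 → ℤ, gs B τ (ic x)) {τ | 0 < τ.im} := by
  intro τ hτ
  have hτ : 0 < τ.im := hτ
  obtain ⟨u, hu, h⟩ := exists_majorant hB (half_pos hτ) 0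
  have hopen : IsOpen {z : ℂ | τ.im / 2 < z.im} := isOpen_lt continuous_const continuous_im
  have := differentiableOn_tsum_of_summable_norm (F := fun (x : Fin 24 → ℤ) z => gs B z (ic x))
    hu (fun x => by unfold gs; fun_prop) hopen (fun x z hz => by
      simpa using h z (le_of_lt hz) 0 (by simp) x)
  exact (this.differentiableAt (hopen.mem_nhds (half_lt_self hτ))).differentiableWithinAt

/-- The inversion formula. Poisson summation produces the dual lattice, which `G`, being unimodular,
identifies with the lattice itself. -/
lemma IsGram.theta_S (h : IsGram B G) (τ : ℍ) :
    ∑' x : Fin 24 → ℤ, gs B (-1 / τ) (ic x) = (τ : ℂ) ^ 12 * theta B τ := by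
  have hG : IsUnit G.det := by simp [h.det_eq]
  let e : (Fin 24 → ℤ) ≃ (Fin 24 → ℤ) :=
    ⟨fun x => G *ᵥ x, fun x => G⁻¹ *ᵥ x, fun x => by simp [mulVec_mulVec, nonsing_inv_mul _ hG],
      fun x => by simp [mulVec_mulVec, mul_nonsing_inv _ hG]⟩
  have hu := isUnit_iff_ne_zero.2 h.det_ne_zero
  have hdual : ∀ x, gs (B⁻¹)ᵀ (-1 / τ) (ic (e x)) = gs B (-1 / τ) (ic x) := fun x => by
    have : (B⁻¹)ᵀ *ᵥ ic (e x) = B *ᵥ ic x := by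
      change (B⁻¹)ᵀ *ᵥ ic (G *ᵥ x) = B *ᵥ ic x
      rw [← map_mulVec_ic, ← h.transpose_mul, mulVec_mulVec, ← Matrix.mul_assoc, ← Matrix.transpose_mul,
        mul_nonsing_inv _ hu, transpose_one, Matrix.one_mul]
    simp only [gs, qf, this]
  have hp := poisson h.abs_det τ.im_pos
  rw [← e.tsum_eq (fun m => gs (B⁻¹)ᵀ (-1 / τ) (ic m)), tsum_congr hdual] at hp
  rw [theta, hp]
  have : ((24 : ℕ) / 2 : ℂ) = (12 : ℕ) := by norm_num
  rw [this, cpow_natCast, div_pow, show Complex.I ^ 12 = 1 by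
    rw [show 12 = 2 * 6 by norm_num, pow_mul, Complex.I_sq]; norm_num]
  have := τ.ne_zero
  field_simp

lemma IsGram.slash_S (h : IsGram B G) : theta B ∣[(12 : ℤ)] ModularGroup.S = theta B := by
  ext τ
  rw [SL_slash_apply, UpperHalfPlane.modular_S_smul]
  have h1 := h.theta_S τ
  have h2 : theta B (UpperHalfPlane.mk (-τ : ℂ)⁻¹ τ.im_inv_neg_coe_pos) =
      (τ : ℂ) ^ 12 * theta B τ := by
    rw [← h1, theta]
    simp [neg_div, inv_neg]
  have h3 : denom (ModularGroup.S : GL (Fin 2) ℝ) τ = τ := by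
    exact ModularGroup.denom_S τ
  rw [h2, h3]
  have := τ.ne_zero
  rw [_root_.zpow_neg, show (12 : ℤ) = (12 : ℕ) from rfl, zpow_natCast]
  field_simp

lemma IsGram.slash_T (h : IsGram B G) : theta B ∣[(12 : ℤ)] ModularGroup.T = theta B := by
  ext τ
  rw [SL_slash_apply, modular_T_smul]
  have h1 : theta B ((1 : ℝ) +ᵥ τ) = theta B τ := by
    refine (h.hasSum_theta _).unique ?_
    have h2 : Function.Periodic.qParam 1 (((1 : ℝ) +ᵥ τ : ℍ) : ℂ) = Function.Periodic.qParam 1 τ := by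
      rw [Function.Periodic.qParam, Function.Periodic.qParam, ← Complex.exp_periodic (_ * (τ : ℂ) / _)]
      congr 1
      simp
      ring
    rw [h2]
    exact h.hasSum_theta τ
  have h3 : denom (ModularGroup.T : GL (Fin 2) ℝ) τ = 1 := by
    refine (ModularGroup.denom_apply ModularGroup.T τ).trans ?_
    simp [ModularGroup.T]
  simp [h1, h3]

/-- The theta series of an even unimodular lattice of rank 24, as a modular form of weight 12 for
`SL₂(ℤ)`. -/
noncomputable def IsGram.form (h : IsGram B G) : ModularForm 𝒮ℒ 12 where
  toFun := theta B
  slash_action_eq' A hA := by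
    obtain ⟨A, rfl⟩ := hA
    exact SlashInvariantForm.slash_action_generators_SL2Z h.slash_S h.slash_T A
  holo' := by
    rw [UpperHalfPlane.mdifferentiable_iff]
    refine (differentiableOn_theta h.det_ne_zero).congr fun z hz => ?_
    simp [theta, ofComplex_apply_of_im_pos hz]
  bdd_at_cusps' hc := by
    rw [Subgroup.IsArithmetic.isCusp_iff_isCusp_SL2Z] at hc
    rw [OnePoint.isBoundedAt_iff_forall_SL2Z hc]
    intro γ _
    rw [SlashInvariantForm.slash_action_generators_SL2Z h.slash_S h.slash_T]
    exact isBoundedAtImInfty_of_hasSum_qExpansion one_pos h.hasSum_theta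

lemma IsGram.coeff_form (h : IsGram B G) (m : ℕ) :
    (qExpansion 1 h.form).coeff m = rep G m :=
  (ModularFormClass.qExpansion_coeff_unique one_pos one_mem_strictPeriods_SL
    (f := h.form) h.hasSum_theta m).symm

lemma IsGram.rep_zero (h : IsGram B G) : rep G 0 = 1 := by
  rw [rep, Nat.card_eq_one_iff_unique]
  refine ⟨⟨fun x y => ?_⟩, ⟨0, by simp⟩⟩
  suffices H : ∀ x : Fin 24 → ℤ, x ⬝ᵥ (G *ᵥ x) = 2 * ((0 : ℕ) : ℤ) → x = 0 from
    Subtype.ext ((H _ x.2).trans (H _ y.2).symm)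
  intro x hx
  obtain ⟨c, hc, hb⟩ := exists_lower_bound h.det_ne_zero
  have h1 := hb (ic x)
  rw [h.qf_eq, hx] at h1
  have h2 : ∑ i, ic x i ^ 2 ≤ 0 := by
    simp at h1
    exact nonpos_of_mul_nonpos_right h1 hc
  ext i
  have h3 := (Finset.sum_eq_zero_iff_of_nonneg (fun i _ => sq_nonneg (ic x i))).1
    (le_antisymm h2 (Finset.sum_nonneg fun i _ => sq_nonneg _)) i (Finset.mem_univ i)
  simpa [ic] using h3

/-- The form `E₄³ = 1 + 720 q + ⋯` of weight 12, together with its integral coefficients. -/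
lemma exists_E4_cube : ∃ (f : ModularForm 𝒮ℒ 12) (e : ℕ → ℤ), e 0 = 1 ∧ e 1 = 720 ∧
    ∀ m, (qExpansion 1 f).coeff m = e m := by
  let s : ℕ → ℤ := fun m => if m = 0 then 1 else 240 * ArithmeticFunction.sigma 3 m
  let p : PowerSeries ℤ := PowerSeries.mk s
  have hp : qExpansion 1 E₄ = p.map (Int.castRingHom ℂ) := by
    ext m
    rw [EisensteinSeries.E_qExpansion_coeff _ ⟨2, rfl⟩]
    have : bernoulli 4 = -1 / 30 := by decide +kernel
    simp only [this, p, PowerSeries.coeff_map, PowerSeries.coeff_mk, s]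
    split_ifs <;> norm_num
  refine ⟨ModularForm.mcast (by norm_num) (E₄.pow 3), fun m => PowerSeries.coeff m (p ^ 3), ?_, ?_, ?_⟩
  · simp [pow_succ, PowerSeries.coeff_mul, p, s]
  · simp [pow_succ, PowerSeries.coeff_mul, Finset.Nat.antidiagonal_succ, p, s]
  · intro m
    simp only [ModularForm.coe_mcast, ModularForm.qExpansion_pow one_pos one_mem_strictPeriods_SL,
      hp, ← map_pow, PowerSeries.coeff_map]
    rfl

end Modular

/-! ### The relation between two theta series, and real factorizations of Gram matrices -/

section Relation
open ModularForm UpperHalfPlane MatrixGroups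

variable {B C : Matrix (Fin 24) (Fin 24) ℝ} {G D : Matrix (Fin 24) (Fin 24) ℤ}

/-- The modular forms `720 Θ_D`, and `r E₄³ + (720 - r) Θ_G` with `r` the number of roots of `D`, have
weight 12 and share the coefficients of `1` and `q` when `G` has no roots, hence are equal by the
Sturm bound. -/
theorem rep_relation (hG : IsGram B G) (hD : IsGram C D) (h1 : rep G 1 = 0) :
    ∃ e : ℕ → ℤ, ∀ m,
      720 * (rep D m : ℤ) = rep D 1 * e m + (720 - rep D 1) * rep G m := by
  obtain ⟨f, e, he0, he1, he⟩ := exists_E4_cube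
  refine ⟨e, fun m => ?_⟩
  obtain ⟨r, hr⟩ : ∃ r : ℂ, r = rep D 1 := ⟨_, rfl⟩
  let F : ModularForm 𝒮ℒ 12 := (720 : ℂ) • hD.form - r • f - (720 - r) • hG.form
  have hF : ∀ m, (qExpansion 1 F).coeff m =
      720 * (rep D m : ℂ) - r * e m - (720 - r) * rep G m := fun m => by
    have h : qExpansion 1 F = (720 : ℂ) • qExpansion 1 hD.form - r • qExpansion 1 f
        - (720 - r) • qExpansion 1 hG.form := by
      rw [FunLike.coe_sub, ModularForm.qExpansion_sub one_pos one_mem_strictPeriods_SL,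
        FunLike.coe_sub, ModularForm.qExpansion_sub one_pos one_mem_strictPeriods_SL]
      simp only [FunLike.coe_smul, ModularForm.qExpansion_smul one_pos one_mem_strictPeriods_SL]
    rw [h]
    simp only [map_sub, PowerSeries.coeff_smul, hD.coeff_form, hG.coeff_form, he, smul_eq_mul]
  have hF0 : F = 0 := by
    refine ModularForm.sturm_bound_levelOne_nat (k := 12) ?_
    refine lt_of_lt_of_le ?_ (PowerSeries.nat_le_order _ 2 fun i hi => ?_)
    · norm_num
    · interval_cases i
      · rw [hF, hD.rep_zero, hG.rep_zero, he0]
        push_cast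
        ring
      · rw [hF, h1, he1, hr]
        push_cast
        ring
  have h2 := hF m
  rw [hF0] at h2
  simp only [FunLike.coe_zero, qExpansion_zero, map_zero] at h2
  have h3 : (720 : ℂ) * rep D m = rep D 1 * e m + (720 - rep D 1) * rep G m := by
    rw [← hr]
    linear_combination -h2
  exact_mod_cast h3

/-- Positivity on `ℤ²⁴` passes to `ℚ²⁴` by clearing denominators, then to `ℝ²⁴` by density. -/
lemma real_nonneg {G : Matrix (Fin 24) (Fin 24) ℤ} (h : ∀ x : Fin 24 → ℤ, 0 ≤ x ⬝ᵥ G *ᵥ x)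
    (x : Fin 24 → ℝ) : 0 ≤ x ⬝ᵥ G.map (Int.cast : ℤ → ℝ) *ᵥ x := by
  have hdense : DenseRange (Pi.map fun (_ : Fin 24) (q : ℚ) => (q : ℝ)) :=
    DenseRange.piMap fun _ => Rat.denseRange_cast
  refine hdense.induction_on (p := fun x => 0 ≤ x ⬝ᵥ G.map (Int.cast : ℤ → ℝ) *ᵥ x) x
    (isClosed_le continuous_const (by fun_prop)) fun q => ?_
  obtain ⟨⟨b, hb⟩, hq⟩ := IsLocalization.exist_integer_multiples_of_finite (nonZeroDivisors ℤ) q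
  choose y hy using hq
  have hb0 : (b : ℝ) ≠ 0 := by simpa using nonZeroDivisors.ne_zero hb
  have hy' : (b : ℝ) • (Pi.map fun (_ : Fin 24) (q : ℚ) => (q : ℝ)) q = ic y := by
    ext i
    have h1 := congrArg (Rat.cast : ℚ → ℝ) (hy i)
    simpa [ic] using h1.symm
  have h2 : 0 ≤ ic y ⬝ᵥ G.map (Int.cast : ℤ → ℝ) *ᵥ ic y := by
    rw [map_mulVec_ic]
    have := h y
    simp only [dotProduct, ic] at this ⊢
    exact_mod_cast this
  rw [← hy', mulVec_smul, smul_dotProduct, dotProduct_smul, smul_smul, smul_eq_mul] at h2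
  exact (mul_nonneg_iff_of_pos_left (mul_self_pos.2 hb0)).1 h2

open scoped MatrixOrder in
/-- A positive semidefinite real matrix factors as `Bᵀ B`. -/
lemma exists_isGram (hsymm : G.IsSymm) (hpos : ∀ x : Fin 24 → ℤ, x ≠ 0 → 0 < x ⬝ᵥ (G *ᵥ x))
    (heven : ∀ i, 2 ∣ G i i) (hdet : G.det = 1) : ∃ B, IsGram B G := by
  have h0 : ∀ x : Fin 24 → ℤ, 0 ≤ x ⬝ᵥ G *ᵥ x := fun x => by
    rcases eq_or_ne x 0 with rfl | hx
    · simp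
    · exact (hpos x hx).le
  have hps : (G.map (Int.cast : ℤ → ℝ)).PosSemidef :=
    Matrix.PosSemidef.of_dotProduct_mulVec_nonneg
      (by
        ext i j
        simpa using hsymm.apply i j) fun x => by simpa using real_nonneg h0 x
  obtain ⟨B, hB⟩ := CStarAlgebra.nonneg_iff_eq_star_mul_self.mp hps.nonneg
  refine ⟨B, ?_, hdet, heven⟩
  rw [hB, star_eq_conjTranspose, conjTranspose_eq_transpose_of_trivial]

end Relation

/-! ### The lattice `D₂₄⁺` and its rotation of order 23 -/

section Cyclic

/-- The columns of `T` are twice a basis of `D₂₄⁺`. They are the all-ones vector (twice the glue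
vector), the vectors `2 e_j - 2 e₂₃` for `1 ≤ j ≤ 22`, and `4 e₂₃`. -/
def T : Matrix (Fin 24) (Fin 24) ℤ := of fun i j =>
  if j = 0 then 1 else if i = j then (if i = 23 then 4 else 2) else if i = 23 then -2 else 0

/-- The integral matrix `4 T⁻¹`. -/
def U : Matrix (Fin 24) (Fin 24) ℤ := of fun j k =>
  (if j = 0 then (if k = 0 then 4 else 0) else if j = 23 then 1 else if k = j then 2 else 0) +
    (if k = 0 then (if j = 0 then 0 else if j = 23 then -24 else -2) else 0)

/-- The Gram matrix of `D₂₄⁺` in the basis given by the columns of `T / 2`. -/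
def D : Matrix (Fin 24) (Fin 24) ℤ := of fun i j =>
  if i = 0 ∧ j = 0 then 6 else if i = 0 then (if j = 23 then 1 else 0)
  else if j = 0 then (if i = 23 then 1 else 0) else if i = 23 ∧ j = 23 then 4
  else if i = 23 ∨ j = 23 then -2 else if i = j then 2 else 1

lemma transpose_T_mul_T : Tᵀ * T = (4 : ℤ) • D := by
  have : ∀ i j, (Tᵀ * T) i j = 4 * D i j := by decide +kernel
  ext i j
  simpa using this i j

lemma T_mul_U : T * U = (4 : ℤ) • (1 : Matrix (Fin 24) (Fin 24) ℤ) := by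
  have : ∀ i j, (T * U) i j = 4 * (1 : Matrix (Fin 24) (Fin 24) ℤ) i j := by decide +kernel
  ext i j
  simpa using this i j

lemma det_T : T.det = 2 ^ 24 := by
  -- Quantifying over pairs lets the `Decidable` instance be found.
  have h : ∀ p : Fin 24 × Fin 24, p.1 < p.2 → T p.1 p.2 = 0 := by decide +kernel
  have h' : T.IsLowerTriangular := fun i j hij => h (i, j) hij
  rw [det_of_isLowerTriangular T h']
  decide +kernel

lemma det_D : D.det = 1 := by
  have h := congrArg det transpose_T_mul_T
  rw [det_mul, det_transpose, det_T, det_smul, Fintype.card_fin] at h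
  linarith

lemma isGram_D : IsGram ((1 / 2 : ℝ) • T.map (Int.cast : ℤ → ℝ)) D where
  transpose_mul := by
    ext i j
    have h := congrFun (congrFun transpose_T_mul_T i) j
    have h2 : ∑ k, (T k i : ℝ) * T k j = 4 * D i j := by
      simp only [mul_apply, transpose_apply, Matrix.smul_apply, smul_eq_mul] at h
      exact_mod_cast h
    have h3 : ∑ k, (1 / 2 * (T k i : ℝ)) * (1 / 2 * T k j) = D i j := by
      rw [← mul_right_inj' (four_ne_zero (α := ℝ)), ← h2, Finset.mul_sum]
      exact Finset.sum_congr rfl fun k _ => by ring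
    exact h3
  det_eq := det_D
  even := by decide +kernel

/-- The vectors of norm `2 m` in `D₂₄⁺`, scaled by 2: integer vectors whose coordinates have one
parity and a sum divisible by 4. -/
def W (m : ℕ) : Set (Fin 24 → ℤ) :=
  {w | (∀ i, 2 ∣ w i - w 0) ∧ 4 ∣ ∑ i, w i ∧ ∑ i, w i ^ 2 = 8 * m}

lemma four_mul_D (x : Fin 24 → ℤ) : ∑ i, (T *ᵥ x) i ^ 2 = 4 * (x ⬝ᵥ D *ᵥ x) := by
  have h1 : ∑ i, (T *ᵥ x) i ^ 2 = (T *ᵥ x) ⬝ᵥ (T *ᵥ x) := by simp [dotProduct, sq]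
  rw [h1, dotProduct_mulVec, ← mulVec_transpose, mulVec_mulVec, transpose_T_mul_T, smul_mulVec,
    smul_dotProduct, dotProduct_comm, smul_eq_mul]

lemma two_dvd_T (x : Fin 24 → ℤ) (i : Fin 24) : 2 ∣ (T *ᵥ x) i - (T *ᵥ x) 0 := by
  have h : ∀ i j, 2 ∣ T i j - T 0 j := by decide +kernel
  simp only [mulVec, dotProduct, ← Finset.sum_sub_distrib, ← sub_mul]
  exact Finset.dvd_sum fun j _ => (h i j).mul_right _

lemma four_dvd_T (x : Fin 24 → ℤ) : 4 ∣ ∑ i, (T *ᵥ x) i := by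
  have h : ∀ j, 4 ∣ ∑ i, T i j := by decide +kernel
  simp only [mulVec, dotProduct]
  rw [Finset.sum_comm]
  simp only [← Finset.sum_mul]
  exact Finset.dvd_sum fun j _ => (h j).mul_right _

/-- The columns of `T` span all vectors satisfying the congruences that define `W`: these congruences
are what makes `4⁻¹ U w` integral. -/
lemma exists_T_eq {w : Fin 24 → ℤ} (h2 : ∀ i, 2 ∣ w i - w 0) (h4 : 4 ∣ ∑ i, w i) :
    ∃ x, T *ᵥ x = w := by
  have h : ∀ j, 4 ∣ (U *ᵥ w) j := fun j => by
    simp only [U, mulVec, dotProduct, of_apply, add_mul, ite_mul, Finset.sum_add_distrib, zero_mul,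
      Finset.sum_ite_eq', Finset.mem_univ, if_true, one_mul]
    split_ifs
    · simp
    · omega
    · have := h2 j
      simp
      omega
  choose x hx using h
  refine ⟨x, ?_⟩
  have h1 : U *ᵥ w = (4 : ℤ) • x := by
    ext j
    simp [hx]
  have h3 := congrArg (T *ᵥ ·) h1
  simp only [mulVec_mulVec, T_mul_U, mulVec_smul, smul_mulVec, one_mulVec] at h3
  exact (smul_right_injective _ (four_ne_zero (α := ℤ)) h3).symm

lemma rep_D (m : ℕ) : rep D m = Nat.card (W m) := by
  refine Nat.card_congr (Equiv.ofBijective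
    (fun x => ⟨T *ᵥ x.1, two_dvd_T _, four_dvd_T _, ?_⟩) ⟨fun x y hxy => ?_, fun w => ?_⟩)
  · rw [four_mul_D, x.2]
    ring
  · have h : T *ᵥ x.1 = T *ᵥ y.1 := congrArg Subtype.val hxy
    exact Subtype.ext (mulVec_injective_of_det_ne_zero (by simp [det_T]) h)
  · obtain ⟨x, hx⟩ := exists_T_eq w.2.1 w.2.2.1
    refine ⟨⟨x, ?_⟩, Subtype.ext hx⟩
    have h1 := four_mul_D x
    rw [hx, w.2.2.2] at h1
    linarith

lemma finite_W (m : ℕ) : (W m).Finite := by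
  refine (Set.finite_Icc (fun _ => -(8 * m : ℤ)) (fun _ => (8 * m : ℤ))).subset fun w hw => ?_
  have h : ∀ i, w i ^ 2 ≤ 8 * m := fun i => hw.2.2 ▸
    Finset.single_le_sum (f := fun i => w i ^ 2) (fun j _ => sq_nonneg _) (Finset.mem_univ i)
  have h' : ∀ i, |w i| ≤ 8 * m := fun i => by
    have h1 := Int.le_self_sq |w i|
    rw [sq_abs] at h1
    exact h1.trans (h i)
  exact ⟨fun i => (abs_le.1 (h' i)).1, fun i => (abs_le.1 (h' i)).2⟩

/-- The permutation of the 24 coordinates that fixes `0` and rotates the other 23 cyclically. -/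
def rot : Equiv.Perm (Fin 24) where
  toFun i := if i = 0 then 0 else if i = 23 then 1 else i + 1
  invFun i := if i = 0 then 0 else if i = 1 then 23 else i - 1
  left_inv := by decide +kernel
  right_inv := by decide +kernel

lemma comp_rot_mem {m : ℕ} {w : Fin 24 → ℤ} (hw : w ∈ W m) : w ∘ rot ∈ W m := by
  refine ⟨fun i => hw.1 _, ?_, ?_⟩
  · exact (Equiv.sum_comp rot w).symm ▸ hw.2.1
  · rw [← hw.2.2]
    exact Equiv.sum_comp rot fun i => w i ^ 2

/-- The action of the rotation on the vectors of `D₂₄⁺` of norm `2 m`. -/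
def rotW (m : ℕ) (w : W m) : W m := ⟨w.1 ∘ rot, comp_rot_mem w.2⟩

lemma rotW_iterate (m k : ℕ) (w : W m) : ((rotW m)^[k] w).1 = w.1 ∘ rot^[k] := by
  induction k with
  | zero => rfl
  | succ k ih =>
    rw [Function.iterate_succ_apply', Function.iterate_succ, ← Function.comp_assoc, ← ih]
    rfl

lemma rotW_iterate_eq_id (m : ℕ) : (rotW m)^[23] = id := by
  have h : rot^[23] = id := funext (by decide +kernel)
  ext1 w
  exact Subtype.ext (by rw [rotW_iterate, h]; rfl)

lemma fixed_const {w : Fin 24 → ℤ} (h : w ∘ rot = w) (i : Fin 23) : w i.succ = w 1 := by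
  have h1 : ∀ k, w ∘ rot^[k] = w := fun k => by
    induction k with
    | zero => rfl
    | succ k ih => rw [Function.iterate_succ, ← Function.comp_assoc, ih, h]
  have h2 : ∀ i : Fin 23, rot^[i.val] 1 = i.succ := by decide +kernel
  rw [← h2]
  exact congrFun (h1 _) 1

/-- A vector of `W m` fixed by the rotation has the shape `(t + 4 u, t, …, t)`, and
`(t + 4 u)² + 23 t² = 8 (2 u² + u t + 3 t²)`. -/
lemma card_fixed (m : ℕ) : Nat.card (Function.fixedPoints (rotW m)) =
    Nat.card {p : ℤ × ℤ // 2 * p.1 ^ 2 + p.1 * p.2 + 3 * p.2 ^ 2 = (m : ℤ)} := by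
  symm
  let f : ℤ × ℤ → Fin 24 → ℤ := fun p => Fin.cons (p.2 + 4 * p.1) fun _ => p.2
  have hf : ∀ p, f p ∘ rot = f p := fun p => by
    have h : ∀ i : Fin 23, ∃ j : Fin 23, rot i.succ = j.succ := by decide +kernel
    ext i
    refine Fin.cases rfl (fun i => ?_) i
    obtain ⟨j, hj⟩ := h i
    simp [f, hj]
  have hsum : ∀ p, ∑ i, f p i = 24 * p.2 + 4 * p.1 := fun p => by
    simp [f, Fin.sum_univ_succ (n := 23)]
    ring
  have hsq : ∀ p, ∑ i, f p i ^ 2 = 8 * (2 * p.1 ^ 2 + p.1 * p.2 + 3 * p.2 ^ 2) := fun p => by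
    simp [f, Fin.sum_univ_succ (n := 23)]
    ring
  refine Nat.card_congr (Equiv.ofBijective (fun p => ⟨⟨f p.1, fun i => ?_, ?_, ?_⟩, ?_⟩)
    ⟨fun p q hpq => ?_, fun w => ?_⟩)
  · refine Fin.cases ?_ (fun i => ?_) i
    · simp
    · simp only [f, Fin.cons_succ, Fin.cons_zero]
      omega
  · rw [hsum]
    omega
  · rw [hsq, p.2]
  · exact Subtype.ext (hf p.1)
  · have h : f p.1 = f q.1 := congrArg (fun w => w.1.1) hpq
    have h0 := congrFun h 0
    have h1 := congrFun h 1
    simp only [f, Fin.cons_zero] at h0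
    have h1 : p.1.2 = q.1.2 := h1
    exact Subtype.ext (Prod.ext (by omega) h1)
  · obtain ⟨⟨w, hw⟩, hfix⟩ := w
    have hc := fixed_const (congrArg Subtype.val hfix)
    have hs : 4 ∣ w 0 + 23 * w 1 := by
      have := hw.2.1
      rw [Fin.sum_univ_succ] at this
      simpa [hc] using this
    -- `w 0 + 23 t` and `w 0 - t` differ by `24 t`.
    obtain ⟨u, hu⟩ : 4 ∣ w 0 - w 1 := by omega
    have hw' : f (u, w 1) = w := by
      ext i
      refine Fin.cases ?_ (fun i => ?_) i
      · simp only [f, Fin.cons_zero]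
        omega
      · simp [f, hc]
    refine ⟨⟨(u, w 1), ?_⟩, Subtype.ext (Subtype.ext hw')⟩
    have := hsq (u, w 1)
    rw [hw', hw.2.2] at this
    simp only at this ⊢
    omega

/-- A map of order 23 on a finite set has as many fixed points, modulo 23, as there are elements. -/
theorem rep_D_modEq (m : ℕ) : (rep D m : ℤ) ≡
    (Nat.card {p : ℤ × ℤ // 2 * p.1 ^ 2 + p.1 * p.2 + 3 * p.2 ^ 2 = (m : ℤ)} : ℤ) [ZMOD 23] := by
  classical
  have := (finite_W m).fintype
  have : Fact (Nat.Prime 23) := ⟨by norm_num⟩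
  have h := Equiv.Perm.card_fixedPoints_modEq (α := W m) (f := rotW m) (p := 23) (n := 1)
    ((hom_coe_pow (fun g : Function.End (W m) => (g : W m → W m)) rfl (fun _ _ => rfl) _ _).trans
      (rotW_iterate_eq_id m))
  rw [← Nat.card_eq_fintype_card, ← Nat.card_eq_fintype_card] at h
  rw [rep_D, ← card_fixed]
  exact Int.natCast_modEq_iff.2 h

end Cyclic

end LeechTheta

/-- Degree 1 congruence `θ_{[2,1,3]}^{(1)} ≡ θ_𝓛^{(1)} (mod 23)`: for a Gram matrix `G`
of the Leech lattice and every integer `n ≥ 0`,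
`#{(a,b) ∈ ℤ² : 2a² + ab + 3b² = n} ≡ #{x ∈ ℤ²⁴ : xᵀGx = 2n} (mod 23)`. -/
theorem theta_binary_congruent_theta_leech_degree_one
    (G : Matrix (Fin 24) (Fin 24) ℤ)
    (hsymm : G.IsSymm)
    (hpos : ∀ x : Fin 24 → ℤ, x ≠ 0 → 0 < x ⬝ᵥ (G *ᵥ x))
    (heven : ∀ i, 2 ∣ G i i)
    (hdet : G.det = 1)
    (hroot : ¬ ∃ x : Fin 24 → ℤ, x ⬝ᵥ (G *ᵥ x) = 2)
    (n : ℕ) :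
    (Nat.card {p : ℤ × ℤ // 2 * p.1 ^ 2 + p.1 * p.2 + 3 * p.2 ^ 2 = (n : ℤ)} : ℤ) ≡
      (Nat.card {x : Fin 24 → ℤ // x ⬝ᵥ (G *ᵥ x) = 2 * (n : ℤ)} : ℤ) [ZMOD 23] := by
  obtain ⟨B, hG⟩ := LeechTheta.exists_isGram hsymm hpos heven hdet
  have hroots : LeechTheta.rep G 1 = 0 :=
    Nat.card_eq_zero.2 (.inl ⟨fun x => hroot ⟨x.1, by simpa using x.2⟩⟩)
  obtain ⟨e, he⟩ := LeechTheta.rep_relation hG LeechTheta.isGram_D hroots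
  have hr : (LeechTheta.rep LeechTheta.D 1 : ℤ) ≡ 0 [ZMOD 23] := by
    have h1 := LeechTheta.rep_D_modEq 1
    have h2 : Nat.card {p : ℤ × ℤ //
        2 * p.1 ^ 2 + p.1 * p.2 + 3 * p.2 ^ 2 = ((1 : ℕ) : ℤ)} = 0 := by
      refine Nat.card_eq_zero.2 (.inl ⟨fun ⟨⟨a, b⟩, h⟩ => ?_⟩)
      -- `8 (2 a² + a b + 3 b²) = (4 a + b)² + 23 b²` forces `b = 0`, and then `2 a² = 1`.
      have hb : b = 0 := by
        push_cast at h
        have : b ^ 2 < 1 := by nlinarith [sq_nonneg (4 * a + b)]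
        exact pow_eq_zero_iff two_ne_zero |>.1 (le_antisymm (by linarith) (sq_nonneg b))
      subst hb
      push_cast at h
      simp only [mul_zero, add_zero] at h
      omega
    rwa [h2] at h1
  refine (LeechTheta.rep_D_modEq n).symm.trans ?_
  change (LeechTheta.rep LeechTheta.D n : ℤ) ≡ (LeechTheta.rep G n : ℤ) [ZMOD 23]
  obtain ⟨k, hk⟩ := (Int.modEq_zero_iff_dvd).1 hr
  have h := he n
  rw [hk] at h
  refine (Int.modEq_iff_dvd).2 (IsCoprime.dvd_of_dvd_mul_left (y := 720)
    (Int.isCoprime_iff_gcd_eq_one.2 (by norm_num))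
    ⟨k * (LeechTheta.rep G n - e n), by linear_combination -h⟩)
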